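/- arXiv:1904.03637 — 2 statements merged into one kernel-verified Lean document; each statement's English description precedes it below -/
import Mathlib

section
/- For every integer n with 2 ≤ n < ω and every countable ordinal α ≥ ω, the big Ramsey degree T(n, ω^α) is infinite; i.e., for every t there exist k and a k-coloring of the n-element subchains of ω^α such that every subchain of ω^α order-isomorphic to ω^α attains at least t colors. -/
open Set

/-- The big Ramsey degree of the `n`-element chain in the chain `C` is at most `t`:
for every `k ≥ 2` and every `k`-coloring of the `n`-element subchains of `C`
(identified with order-embeddings `Fin n ↪o C`) there is a subset `U ⊆ C`
order-isomorphic to `C` on which the coloring attains at most `t` values. -/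
def brdLE (C : Type*) [LinearOrder C] (n t : ℕ) : Prop :=
  ∀ k : ℕ, 2 ≤ k → ∀ χ : (Fin n ↪o C) → Fin k,
    ∃ U : Set C, Nonempty (U ≃o C) ∧ (χ '' {f | ∀ i, f i ∈ U}).ncard ≤ t

/-- `T(n, C) = t`: `t` is the least natural number with `brdLE C n t`. -/
def hasBRD (C : Type*) [LinearOrder C] (n t : ℕ) : Prop :=
  brdLE C n t ∧ ∀ s : ℕ, brdLE C n s → t ≤ s

/-- `C` has finite big Ramsey degrees: `T(n, C) < ∞` for every `n ≥ 1`. -/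
def finiteBRD (C : Type*) [LinearOrder C] : Prop :=
  ∀ n : ℕ, 1 ≤ n → ∃ t : ℕ, brdLE C n t


section Walks

variable {W : Type*} [LinearOrder W]

/-- Records of the enumeration `e` seen from `x`. -/
def recSet (e : W → ℕ) (x : W) : Set W :=
  {z | x ≤ z ∧ ∀ w, x ≤ w → w < z → e z < e w}

theorem recSet_le {e : W → ℕ} {x z : W} (h : z ∈ recSet e x) : e z ≤ e x := by
  rcases h.1.eq_or_lt with h1 | h1
  · rw [h1]
  · exact (h.2 x le_rfl h1).le

theorem recSet_finite {e : W → ℕ} (he : Function.Injective e) (x : W) :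
    (recSet e x).Finite := by
  apply Set.Finite.of_finite_image (f := e) _ he.injOn
  apply (Set.finite_Iic (e x)).subset
  rintro _ ⟨z, hz, rfl⟩
  exact recSet_le hz

theorem recSet_self (e : W → ℕ) (x : W) : x ∈ recSet e x :=
  ⟨le_rfl, fun _ h1 h2 => absurd h2 (not_lt.2 h1)⟩

/-- Going down from one point to a smaller one through points of larger index. -/
theorem mem_recSet_down {e : W → ℕ} {a a' : W} (haa : a' ≤ a)
    (h : ∀ w, a' ≤ w → w < a → e a < e w) {z : W} (hz : a ≤ z) :
    z ∈ recSet e a' ↔ z ∈ recSet e a := by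
  constructor
  · rintro ⟨_, h2⟩
    exact ⟨hz, fun w hw => h2 w (haa.trans hw)⟩
  · intro hh
    refine ⟨haa.trans hz, fun w hw hwz => ?_⟩
    rcases lt_or_ge w a with h3 | h3
    · exact (recSet_le hh).trans_lt (h w hw h3)
    · exact hh.2 w h3 hwz

/-- Number of records of `x` below `y` with index smaller than that of `b`. -/
noncomputable def cnt (e : W → ℕ) (x y b : W) : ℕ :=
  {w | w ∈ recSet e x ∧ w < y ∧ e w < e b}.ncard

/-- The oscillation number. -/
noncomputable def osc (e : W → ℕ) (x y : W) : ℕ :=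
  (cnt e x y '' recSet e y).ncard

theorem osc_step {e : W → ℕ} (he : Function.Injective e) {a b a' b' : W}
    (haa : a' < a) (hab : a < b') (hbb : b' < b)
    (h1 : ∀ w, a' ≤ w → w < a → e a < e w ∧ e b < e w)
    (h2 : ∀ w, b' ≤ w → w < b → e a' < e w) :
    osc e a' b' = osc e a b + 1 := by
  have hea : e a < e a' := (h1 a' le_rfl haa).1
  have heb : e b < e a' := (h1 a' le_rfl haa).2
  have hA : ∀ z, a ≤ z → (z ∈ recSet e a' ↔ z ∈ recSet e a) := fun z hz =>
    mem_recSet_down haa.le (fun w hw hw' => (h1 w hw hw').1) hz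
  have hB : ∀ z, b ≤ z → (z ∈ recSet e b' ↔ z ∈ recSet e b) := fun z hz =>
    mem_recSet_down hbb.le (fun w hw hw' => heb.trans (h2 w hw hw')) hz
  have hold : ∀ z ∈ recSet e b, cnt e a' b' z = cnt e a b z := by
    intro z hz
    have hez := recSet_le hz
    unfold cnt
    congr 1
    ext w
    constructor
    · rintro ⟨hw1, hw2, hw3⟩
      rcases lt_or_ge w a with h | h
      · have := (h1 w hw1.1 h).2
        omega
      · exact ⟨(hA w h).1 hw1, hw2.trans hbb, hw3⟩
    · rintro ⟨hw1, hw2, hw3⟩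
      refine ⟨(hA w hw1.1).2 hw1, ?_, hw3⟩
      by_contra hc
      have := h2 w (not_lt.1 hc) hw2
      omega
  have hnew : ∀ z ∈ recSet e b', z < b →
      cnt e a' b' z = {w | w ∈ recSet e a' ∧ w < b'}.ncard := by
    intro z hz hzb
    unfold cnt
    congr 1
    ext w
    constructor
    · rintro ⟨hw1, hw2, hw3⟩
      exact ⟨hw1, hw2⟩
    · rintro ⟨hw1, hw2⟩
      exact ⟨hw1, hw2, (recSet_le hw1).trans_lt (h2 z hz.1 hzb)⟩
  set M := {w | w ∈ recSet e a' ∧ w < b'}.ncard with hM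
  have himg : cnt e a' b' '' recSet e b' = insert M (cnt e a b '' recSet e b) := by
    ext v
    constructor
    · rintro ⟨z, hz, rfl⟩
      rcases lt_or_ge z b with h | h
      · left; exact hnew z hz h
      · right
        have hz' := (hB z h).1 hz
        exact ⟨z, hz', (hold z hz').symm⟩
    · rintro (rfl | ⟨z, hz, rfl⟩)
      · exact ⟨b', recSet_self e b', hnew b' (recSet_self e b') hbb⟩
      · exact ⟨z, (hB z hz.1).2 hz, hold z hz⟩
  unfold osc
  rw [himg, Set.ncard_insert_of_notMem _ ((recSet_finite he b).image _)]
  · rintro ⟨z, hz, hzM⟩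
    rw [← hold z hz, hM] at hzM
    apply hzM.not_lt
    unfold cnt
    apply Set.ncard_lt_ncard
    · refine ⟨fun w hw => ⟨hw.1, hw.2.1⟩, fun hsub => ?_⟩
      have := (hsub (show a' ∈ _ from ⟨recSet_self e a', haa.trans hab⟩)).2.2
      have := recSet_le hz
      omega
    · exact (recSet_finite he a').subset fun w hw => hw.1

/-- Cantor-Bendixson style derivatives (from the left). -/
def Big (X : Set W) : ℕ → W → Prop
  | 0, z => z ∈ X
  | m + 1, z => (∃ u, u < z) ∧ ∀ u < z, ∃ z', u < z' ∧ z' < z ∧ Big X m z'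

theorem Big.pred {X : Set W} : ∀ {m : ℕ} {z : W}, Big X (m + 2) z → Big X (m + 1) z
  | 0, z, h => by
    refine ⟨h.1, fun u hu => ?_⟩
    obtain ⟨z', h1, h2, h3⟩ := h.2 u hu
    obtain ⟨z'', h4, h5, h6⟩ := h3.2 u h1
    exact ⟨z'', h4, h5.trans h2, h6⟩
  | m + 1, z, h => by
    refine ⟨h.1, fun u hu => ?_⟩
    obtain ⟨z', h1, h2, h3⟩ := h.2 u hu
    exact ⟨z', h1, h2, Big.pred h3⟩

theorem Big.mono {X : Set W} {i m : ℕ} (him : i ≤ m) {z : W} (h : Big X (m + 1) z) :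
    Big X (i + 1) z := by
  induction m, him using Nat.le_induction with
  | base => exact h
  | succ m hm ih => exact ih h.pred

theorem Big.near {X : Set W} {e : W → ℕ} (he : Function.Injective e) {m : ℕ} {z : W}
    (h : Big X (m + 1) z) (N : ℕ) (v : W) (hv : v < z) :
    ∃ z', v < z' ∧ z' < z ∧ Big X m z' ∧ ∀ w, z' ≤ w → w < z → N < e w := by
  have hfin : ({w | w < z ∧ e w ≤ N} ∪ {v}).Finite := by
    apply Set.Finite.union _ (Set.finite_singleton v)
    apply Set.Finite.of_finite_image (f := e) _ he.injOn
    apply (Set.finite_Iic N).subset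
    rintro _ ⟨z, hz, rfl⟩
    exact hz.2
  obtain ⟨u, hu, hmax⟩ := hfin.exists_maximalFor id _ ⟨v, Or.inr rfl⟩
  have hmax' : ∀ w ∈ ({w | w < z ∧ e w ≤ N} ∪ {v}), w ≤ u := by
    intro w hw
    by_contra hc
    exact hc (hmax hw (not_le.1 hc).le)
  have huz : u < z := by
    rcases hu with hu | hu
    · exact hu.1
    · rw [hu]; exact hv
  obtain ⟨z', h1, h2, h3⟩ := h.2 u huz
  refine ⟨z', (hmax' v (Or.inr rfl)).trans_lt h1, h2, h3, fun w hw hwz => ?_⟩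
  by_contra hc
  exact absurd (hmax' w (Or.inl ⟨hwz, not_lt.1 hc⟩)) (not_le.2 (h1.trans_le hw))

theorem exists_osc {X : Set W} {e : W → ℕ} (he : Function.Injective e) :
    ∀ (i : ℕ) (a b : W), a < b → Big X i a → Big X i b →
      ∃ x ∈ X, ∃ y ∈ X, x < y ∧ osc e x y = osc e a b + i
  | 0, a, b, hab, ha, hb => ⟨a, ha, b, hb, hab, rfl⟩
  | i + 1, a, b, hab, ha, hb => by
    obtain ⟨u, hu⟩ := ha.1
    obtain ⟨a', _, h1, h2, h3⟩ := ha.near he (max (e a) (e b)) u hu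
    obtain ⟨b', h4, h5, h6, h7⟩ := hb.near he (e a') a hab
    obtain ⟨x, hx, y, hy, hxy, ho⟩ := exists_osc he i a' b' (h1.trans h4) h2 h6
    refine ⟨x, hx, y, hy, hxy, ?_⟩
    rw [ho, osc_step he h1 h4 h5 (fun w hw hw' => max_lt_iff.1 (h3 w hw hw')) h7]
    omega

theorem exists_osc_mod {X : Set W} {e : W → ℕ} (he : Function.Injective e) {k : ℕ} {z : W}
    (hk : 0 < k) (hz : Big X (k + 1) z) (c : ℕ) (hc : c < k) :
    ∃ x ∈ X, ∃ y ∈ X, x < y ∧ osc e x y % k = c := by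
  obtain ⟨u, hu⟩ := hz.1
  obtain ⟨a, _, haz, ha⟩ := hz.2 u hu
  obtain ⟨b, hab, hbz, hb⟩ := hz.2 a haz
  obtain ⟨k, rfl⟩ : ∃ k', k = k' + 1 := ⟨k - 1, by omega⟩
  have key : ∃ i, i ≤ k ∧ (osc e a b + (i + 1)) % (k + 1) = c := by
    set s := (osc e a b + 1) with hs
    have hr := Nat.mod_lt s hk
    rcases le_or_gt (s % (k + 1)) c with h | h
    · refine ⟨c - s % (k + 1), by omega, ?_⟩
      have : osc e a b + (c - s % (k + 1) + 1) = s + (c - s % (k + 1)) := by omega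
      rw [this, Nat.add_mod, Nat.mod_eq_of_lt (show c - s % (k + 1) < k + 1 by omega),
        Nat.mod_eq_of_lt (by omega)]
      omega
    · refine ⟨c + (k + 1) - s % (k + 1), by omega, ?_⟩
      have : osc e a b + (c + (k + 1) - s % (k + 1) + 1)
        = s + (c + (k + 1) - s % (k + 1)) := by omega
      rw [this, Nat.add_mod,
        Nat.mod_eq_of_lt (show c + (k + 1) - s % (k + 1) < k + 1 by omega)]
      have : s % (k + 1) + (c + (k + 1) - s % (k + 1)) = c + (k + 1) := by omega
      rw [this, Nat.add_mod_right, Nat.mod_eq_of_lt hc]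
  obtain ⟨i, hi, hic⟩ := key
  obtain ⟨x, hx, y, hy, hxy, ho⟩ := exists_osc he (i + 1) a b hab (ha.mono hi) (hb.mono hi)
  exact ⟨x, hx, y, hy, hxy, by rw [ho, hic]⟩

open Ordinal in
theorem big_of_strictMono [WellFoundedLT W] {X : Set W} (g : Ordinal → W)
    (hg : StrictMonoOn g (Set.Iio (ω ^ ω))) (hX : ∀ a < ω ^ ω, g a ∈ X) :
    ∀ (m : ℕ) (a : Ordinal), a < ω ^ ω →
      ∃ s, IsLUB (g '' Set.Iio (a + ω ^ m)) s ∧ Big X m s := by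
  have hadd : ∀ (m : ℕ) (a : Ordinal), a < ω ^ ω → a + ω ^ m < ω ^ ω := by
    intro m a ha
    apply isPrincipal_add_omega0_opow _ ha
    rw [← opow_natCast]
    exact (opow_lt_opow_iff_right one_lt_omega0).2 (natCast_lt_omega0 m)
  have hlub : ∀ (m : ℕ) (a : Ordinal), a < ω ^ ω →
      ∃ s, IsLUB (g '' Set.Iio (a + ω ^ m)) s := by
    intro m a ha
    have hne : (upperBounds (g '' Set.Iio (a + ω ^ m))).Nonempty := by
      refine ⟨g (a + ω ^ m), ?_⟩
      rintro _ ⟨b, hb, rfl⟩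
      exact (hg (lt_trans hb (hadd m a ha)) (hadd m a ha) hb).le
    obtain ⟨s, hs, hmin⟩ := wellFounded_lt.has_min _ hne
    exact ⟨s, hs, fun t ht => not_lt.1 (hmin t ht)⟩
  intro m
  induction m with
  | zero =>
    intro a ha
    refine ⟨g a, ⟨?_, ?_⟩, hX a ha⟩
    · rintro _ ⟨b, hb, rfl⟩
      have hb' : b ≤ a := by
        have : b < a + 1 := by simpa using hb
        exact Order.lt_add_one_iff.1 this
      exact hg.monotoneOn (lt_of_le_of_lt hb' ha) ha hb'
    · intro t ht
      refine ht ⟨a, ?_, rfl⟩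
      simp
  | succ m ih =>
    intro a ha
    obtain ⟨s, hs⟩ := hlub (m + 1) a ha
    have hpos : ∀ j : ℕ, (0 : Ordinal) < ω ^ j := fun j => pow_pos omega0_pos j
    have hnext : ∀ b, b < a + ω ^ (m + 1) → ∃ s', g b ≤ s' ∧ s' < s ∧ Big X m s' := by
      intro b hb
      have hb1 : max a b < a + ω ^ (m + 1) :=
        max_lt (lt_add_of_pos_right a (hpos _)) hb
      have hb2 : max a b < ω ^ ω := hb1.trans (hadd _ a ha)
      obtain ⟨s', hs', hbig⟩ := ih (max a b) hb2
      have hc : max a b + ω ^ m < a + ω ^ (m + 1) := by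
        obtain ⟨c, hc⟩ : ∃ c, max a b = a + c :=
          ⟨max a b - a, (Ordinal.add_sub_cancel_of_le (le_max_left a b)).symm⟩
        rw [hc, add_assoc]
        rw [hc] at hb1
        have hc1 : c < ω ^ (m + 1) := lt_of_add_lt_add_left hb1
        apply add_lt_add_right
        rw [← opow_natCast] at hc1 ⊢
        rw [← opow_natCast]
        apply isPrincipal_add_omega0_opow _ hc1
        exact (opow_lt_opow_iff_right one_lt_omega0).2 (by exact_mod_cast Nat.lt_succ_self m)
      have hcω := hc.trans (hadd _ a ha)
      refine ⟨s', ?_, ?_, hbig⟩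
      · apply hs'.1
        exact ⟨b, lt_of_le_of_lt (le_max_right a b) (lt_add_of_pos_right _ (hpos m)), rfl⟩
      · have h1 : s' ≤ g (max a b + ω ^ m) := by
          apply hs'.2
          rintro _ ⟨d, hd, rfl⟩
          exact (hg (lt_trans hd hcω) hcω hd).le
        have hd : max a b + ω ^ m + 1 < a + ω ^ (m + 1) := by
          have hl : Order.IsSuccLimit (a + ω ^ (m + 1)) := by
            apply isSuccLimit_add
            rw [← opow_natCast]
            apply isSuccLimit_opow_left isSuccLimit_omega0
            simp
          exact hl.add_one_lt hc
        have hdω := hd.trans (hadd _ a ha)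
        have h2 : g (max a b + ω ^ m) < g (max a b + ω ^ m + 1) :=
          hg hcω hdω (lt_add_one _)
        exact h1.trans_lt (h2.trans_le (hs.1 ⟨_, hd, rfl⟩))
    refine ⟨s, hs, ?_, ?_⟩
    · obtain ⟨s', _, h, _⟩ := hnext a (lt_add_of_pos_right a (hpos _))
      exact ⟨s', h⟩
    · intro u hu
      obtain ⟨_, ⟨b, hb, rfl⟩, hub⟩ := (lt_isLUB_iff hs).1 hu
      obtain ⟨s', h1, h2, h3⟩ := hnext b hb
      exact ⟨s', hub.trans_le h1, h2, h3⟩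

end Walks

/-- `T(n, ω^α) = ∞` for every `2 ≤ n < ω` and every countable ordinal `α ≥ ω`:
for every `t` there are `k ≥ 2` and a `k`-coloring of the `n`-element subchains of `ω^α`
such that every subchain of `ω^α` order-isomorphic to `ω^α` attains at least `t` colors. -/
theorem stmt17 (n : ℕ) (hn : 2 ≤ n) (α : Ordinal)
    (hα : Ordinal.omega0 ≤ α) (hcnt : α.card ≤ Cardinal.aleph0) (t : ℕ) :
    ∃ k : ℕ, 2 ≤ k ∧ ∃ χ : (Fin n ↪o ↥(Set.Iio (Ordinal.omega0 ^ α))) → Fin k,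
      ∀ U : Set ↥(Set.Iio (Ordinal.omega0 ^ α)),
        Nonempty (U ≃o ↥(Set.Iio (Ordinal.omega0 ^ α))) →
          t ≤ (χ '' {f | ∀ i, f i ∈ U}).ncard := by
  have hα0 : α ≠ 0 := by
    rintro rfl
    exact absurd hα (not_le.2 Ordinal.omega0_pos)
  have hcount : Countable ↥(Set.Iio (Ordinal.omega0 ^ α)) := by
    rw [← Cardinal.mk_le_aleph0_iff, Cardinal.mk_Iio_ordinal, Cardinal.lift_le_aleph0,
      Ordinal.card_omega0_opow hα0]
    exact max_le le_rfl hcnt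
  obtain ⟨e, he⟩ := hcount.exists_injective_nat
  have hk : 0 < t + 2 := by omega
  refine ⟨t + 2, by omega,
    fun f => ⟨osc e (f ⟨0, by omega⟩) (f ⟨1, by omega⟩) % (t + 2), Nat.mod_lt _ hk⟩, ?_⟩
  rintro U ⟨φ⟩
  have hlim : Order.IsSuccLimit (Ordinal.omega0 ^ α) :=
    Ordinal.isSuccLimit_opow_left Ordinal.isSuccLimit_omega0 hα0
  have hle : Ordinal.omega0 ^ Ordinal.omega0 ≤ Ordinal.omega0 ^ α :=
    Ordinal.opow_le_opow_right Ordinal.omega0_pos hα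
  -- the copy contains a point of high rank
  have hbig : ∃ z, Big U (t + 2 + 1) z := by
    classical
    have h0 : (0 : Ordinal) < Ordinal.omega0 ^ α := Ordinal.opow_pos _ Ordinal.omega0_pos
    let g : Ordinal → ↥(Set.Iio (Ordinal.omega0 ^ α)) := fun b =>
      if h : b < Ordinal.omega0 ^ α then (φ.symm ⟨b, h⟩ : U).1 else ⟨0, h0⟩
    have hg : StrictMonoOn g (Set.Iio (Ordinal.omega0 ^ Ordinal.omega0)) := by
      intro a ha b hb hab
      have ha' : a < Ordinal.omega0 ^ α := lt_of_lt_of_le ha hle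
      have hb' : b < Ordinal.omega0 ^ α := lt_of_lt_of_le hb hle
      simp only [g, dif_pos ha', dif_pos hb']
      exact φ.symm.strictMono (show (⟨a, ha'⟩ : ↥(Set.Iio (Ordinal.omega0 ^ α))) < ⟨b, hb'⟩
        from hab)
    obtain ⟨s, _, hs⟩ := big_of_strictMono (X := U) g hg (fun a ha => by
      have ha' : a < Ordinal.omega0 ^ α := lt_of_lt_of_le ha hle
      simp only [g, dif_pos ha']
      exact (φ.symm ⟨a, ha'⟩).2) (t + 2 + 1) 0 (Ordinal.opow_pos _ Ordinal.omega0_pos)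
    exact ⟨s, hs⟩
  obtain ⟨z, hz⟩ := hbig
  have hnomax : ∀ u : U, ∃ v : U, u < v := by
    intro u
    have h1 := hlim.add_one_lt (φ u).2
    refine ⟨φ.symm ⟨_, h1⟩, ?_⟩
    rw [OrderIso.lt_symm_apply]
    exact Subtype.mk_lt_mk.2 (lt_add_one _)
  choose nx hnx using hnomax
  -- every color is attained
  have hall : ∀ c : Fin (t + 2), c ∈ (fun f : Fin n ↪o ↥(Set.Iio (Ordinal.omega0 ^ α)) =>
      (⟨osc e (f ⟨0, by omega⟩) (f ⟨1, by omega⟩) % (t + 2), Nat.mod_lt _ hk⟩ : Fin (t + 2))) ''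
      {f | ∀ i, f i ∈ U} := by
    intro c
    obtain ⟨x, hx, y, hy, hxy, ho⟩ := exists_osc_mod he hk hz c.1 c.2
    let h : ℕ → U := fun i => Nat.casesOn i ⟨x, hx⟩ (fun j => nx^[j] ⟨y, hy⟩)
    have hmono : StrictMono h := by
      apply strictMono_nat_of_lt_succ
      rintro (_ | j)
      · exact hxy
      · change nx^[j] _ < nx^[j + 1] _
        rw [Function.iterate_succ_apply']
        exact hnx _
    refine ⟨OrderEmbedding.ofStrictMono (fun i : Fin n => (h i.1).1) (fun i j hij => hmono hij),
      fun i => (h i.1).2, ?_⟩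
    apply Fin.ext
    exact ho
  rw [Set.eq_univ_of_forall hall, Set.ncard_univ]
  simp
end

section
/- Let α be a countable ordinal. Then α has finite big Ramsey degrees (T(n, α) < ∞ for all n ≥ 1) if and only if α < ω^ω. Moreover, if α ≥ ω^ω then T(n, α) = ∞ for all 2 ≤ n < ω. -/
open Set

section Neg
set_option linter.unusedSectionVars false
variable {C : Type*} [LinearOrder C]

/-- A combinatorial version of having order type at least `ω ^ m`. -/
def Large : ℕ → Set C → Prop
  | 0, A => A.Nonempty
  | m + 1, A => ∃ g : ℕ → Set C, (∀ i, g i ⊆ A ∧ Large m (g i)) ∧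
      ∀ i j, i < j → ∀ x ∈ g i, ∀ y ∈ g j, x < y

theorem Large.nonempty {m : ℕ} {A : Set C} (h : Large m A) : A.Nonempty := by
  induction m generalizing A with
  | zero => exact h
  | succ m ih =>
    obtain ⟨g, hg, -⟩ := h
    exact (ih (hg 0).2).mono (hg 0).1

theorem Large.mono {m : ℕ} {A B : Set C} (h : Large m A) (hAB : A ⊆ B) : Large m B := by
  cases m with
  | zero => exact Set.Nonempty.mono hAB h
  | succ m =>
    obtain ⟨g, hg, h2⟩ := h
    exact ⟨g, fun i => ⟨(hg i).1.trans hAB, (hg i).2⟩, h2⟩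

theorem Large.part {m : ℕ} {A B D : Set C} (h : Large m A) (hA : A ⊆ B ∪ D) :
    Large m (A ∩ B) ∨ Large m (A ∩ D) := by
  induction m generalizing A with
  | zero =>
    obtain ⟨x, hx⟩ := h
    rcases hA hx with h | h
    · exact Or.inl ⟨x, hx, h⟩
    · exact Or.inr ⟨x, hx, h⟩
  | succ m ih =>
    obtain ⟨g, hg, h2⟩ := h
    have key : ∀ E : Set C, (∃ φ : ℕ → ℕ, StrictMono φ ∧ ∀ i, Large m (g (φ i) ∩ E)) →
        Large (m + 1) (A ∩ E) := by
      rintro E ⟨φ, hφ, hL⟩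
      refine ⟨fun i => g (φ i) ∩ E, fun i => ⟨?_, hL i⟩, ?_⟩
      · exact Set.inter_subset_inter_left _ (hg _).1
      · intro i j hij x hx y hy
        exact h2 _ _ (hφ hij) x hx.1 y hy.1
    by_cases hf : ∃ᶠ i in Filter.atTop, Large m (g i ∩ B)
    · exact Or.inl (key B (Filter.extraction_of_frequently_atTop hf))
    · right
      apply key
      refine Filter.extraction_of_eventually_atTop (P := fun i => Large m (g i ∩ D)) ?_
      filter_upwards [Filter.not_frequently.1 hf] with i hi
      exact (ih (hg i).2 ((hg i).1.trans hA)).resolve_left hi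

theorem Large.part_fin {m : ℕ} {A : Set C} (h : Large m A) (ν : C → ℕ) (K : ℕ)
    (hK : ∀ x ∈ A, ν x ≤ K) : ∃ k, Large m (A ∩ {x | ν x = k}) := by
  induction K generalizing A with
  | zero =>
    refine ⟨0, h.mono fun x hx => ⟨hx, ?_⟩⟩
    simpa using hK x hx
  | succ K ih =>
    rcases h.part (B := {x | ν x ≤ K}) (D := {x | ν x = K + 1}) (by
      intro x hx
      have := hK x hx
      simp only [Set.mem_union, Set.mem_ofPred_eq]
      omega) with h | h
    · obtain ⟨k, hk⟩ := ih h (fun x hx => hx.2)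
      exact ⟨k, hk.mono fun x hx => ⟨hx.1.1, hx.2⟩⟩
    · exact ⟨_, h⟩

/-- `t` is an end-extension of `s`. -/
def EExt (s t : Finset ℕ) : Prop := ∃ d : Finset ℕ, t = s ∪ d ∧ ∀ a ∈ s, ∀ b ∈ d, a < b

def Good (F : C → Finset ℕ) : ℕ → Finset ℕ → Set C → Prop
  | 0, s, A => ∃ x ∈ A, EExt s (F x)
  | m + 1, s, A => ∀ N : ℕ, ∃ A' ⊆ A, ∃ d : Finset ℕ, d.Nonempty ∧ (∀ a ∈ d, N < a) ∧
      Good F m (s ∪ d) A'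

theorem Good.mono {F : C → Finset ℕ} {m : ℕ} {s : Finset ℕ} {A B : Set C}
    (h : Good F m s A) (hAB : A ⊆ B) : Good F m s B := by
  cases m with
  | zero => obtain ⟨x, hx, h⟩ := h; exact ⟨x, hAB hx, h⟩
  | succ m =>
    intro N
    obtain ⟨A', hA', r⟩ := h N
    exact ⟨A', hA'.trans hAB, r⟩

def sh (n : ℕ) (s : Finset ℕ) : Finset ℕ := insert n (s.image (fun a => a + n + 1))

theorem sh_union (n : ℕ) (s d : Finset ℕ) :
    sh n (s ∪ d) = sh n s ∪ d.image (fun a => a + n + 1) := by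
  simp [sh, Finset.image_union]

theorem Good.shift {F F' : C → Finset ℕ} {n m : ℕ} {s : Finset ℕ} {A : Set C}
    (h : Good F m s A) (hF : ∀ x ∈ A, F' x = sh n (F x)) : Good F' m (sh n s) A := by
  induction m generalizing s A with
  | zero =>
    obtain ⟨x, hx, d, hd, hlt⟩ := h
    refine ⟨x, hx, d.image (fun a => a + n + 1), ?_, ?_⟩
    · rw [hF x hx, hd, sh_union]
    · intro a ha b hb
      simp only [sh, Finset.mem_insert, Finset.mem_image] at ha hb
      obtain ⟨b, hb, rfl⟩ := hb
      rcases ha with rfl | ⟨a, ha, rfl⟩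
      · omega
      · have := hlt a ha b hb
        omega
  | succ m ih =>
    intro N
    obtain ⟨A', hA', d, hd, hN, hg⟩ := h N
    refine ⟨A', hA', d.image (fun a => a + n + 1), hd.image _, ?_, ?_⟩
    · intro a ha
      simp only [Finset.mem_image] at ha
      obtain ⟨a, ha, rfl⟩ := ha
      have := hN a ha
      omega
    · rw [← sh_union]
      exact ih hg (fun x hx => hF x (hA' hx))

def PP (D : Set C) : Prop :=
  ∃ F : C → Finset ℕ, ∀ m A, A ⊆ D → Large m A → ∃ s, Good F m s A

theorem Good.zero {F : C → Finset ℕ} {A : Set C} (h : A.Nonempty) : ∃ s, Good F 0 s A := by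
  obtain ⟨x, hx⟩ := h
  exact ⟨F x, x, hx, ∅, by simp, by simp⟩

theorem PP.glue (D : Set C) (ν : C → ℕ) (hν : ∀ x ∈ D, ∀ y ∈ D, x ≤ y → ν x ≤ ν y)
    (h : ∀ k, PP (D ∩ {x | ν x = k})) : PP D := by
  choose F hF using h
  refine ⟨fun x => sh (ν x) (F (ν x) x), ?_⟩
  intro m A hAD hA
  have key : ∀ m' (B : Set C) k, B ⊆ D → Large m' (B ∩ {x | ν x = k}) →
      ∃ s, Good (fun x => sh (ν x) (F (ν x) x)) m' (sh k s) (B ∩ {x | ν x = k}) := by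
    intro m' B k hB hL
    obtain ⟨s, hs⟩ := hF k m' _ (Set.inter_subset_inter_left _ hB) hL
    refine ⟨s, hs.shift ?_⟩
    rintro x ⟨-, hx⟩
    simp only [Set.mem_ofPred_eq] at hx
    simp [hx]
  cases m with
  | zero => exact Good.zero hA
  | succ m =>
    obtain ⟨g, hg, h2⟩ := hA
    have hgD : ∀ i, g i ⊆ D := fun i => (hg i).1.trans hAD
    by_cases hb : ∃ K, ∀ i, ∀ x ∈ g i, ν x ≤ K
    · obtain ⟨K, hK⟩ := hb
      have hL : Large (m + 1) (⋃ i, g i) :=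
        ⟨g, fun i => ⟨Set.subset_iUnion g i, (hg i).2⟩, h2⟩
      obtain ⟨k, hk⟩ := hL.part_fin ν K (by
        intro x hx
        obtain ⟨i, hi⟩ := Set.mem_iUnion.1 hx
        exact hK i x hi)
      obtain ⟨s, hs⟩ := key _ _ k (Set.iUnion_subset hgD) hk
      exact ⟨_, hs.mono (Set.inter_subset_left.trans (Set.iUnion_subset fun i => (hg i).1))⟩
    · push Not at hb
      refine ⟨∅, fun N => ?_⟩
      obtain ⟨i, x, hx, hxN⟩ := hb N
      obtain ⟨y, hy⟩ := (hg (i + 2)).2.nonempty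
      obtain ⟨k, hk⟩ := (hg (i + 1)).2.part_fin ν (ν y) (by
        intro z hz
        exact hν z (hgD _ hz) y (hgD _ hy) (h2 _ _ (by omega) z hz y hy).le)
      obtain ⟨s, hs⟩ := key _ _ k (hgD _) hk
      obtain ⟨z, hz, hzk⟩ := hk.nonempty
      have h3 := hν x (hgD _ hx) z (hgD _ hz) (h2 _ _ (by omega) x hx z hz).le
      simp only [Set.mem_ofPred_eq] at hzk
      refine ⟨_, Set.inter_subset_left.trans (hg (i + 1)).1, sh k s, ?_, ?_, by simpa using hs⟩
      · exact ⟨k, by simp [sh]⟩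
      · intro a ha
        simp only [sh, Finset.mem_insert, Finset.mem_image] at ha
        rcases ha with rfl | ⟨b, hb, rfl⟩ <;> omega

theorem PP.subset {D E : Set C} (h : PP E) (hD : D ⊆ E) : PP D := by
  obtain ⟨F, hF⟩ := h
  exact ⟨F, fun m A hA => hF m A (hA.trans hD)⟩

theorem PP.insert_pt {D : Set C} (x : C) (h : PP D) : PP (D ∪ {x}) := by
  obtain ⟨F, hF⟩ := h
  refine ⟨F, fun m A hA hL => ?_⟩
  cases m with
  | zero => exact Good.zero hL
  | succ m =>
    rcases hL.part hA with h | h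
    · obtain ⟨s, hs⟩ := hF _ _ Set.inter_subset_right h
      exact ⟨s, hs.mono Set.inter_subset_left⟩
    · exfalso
      obtain ⟨g, hg, h2⟩ := h
      obtain ⟨y, hy⟩ := (hg 0).2.nonempty
      obtain ⟨z, hz⟩ := (hg 1).2.nonempty
      have h3 := h2 0 1 (by omega) y hy z hz
      have h4 : y = x := ((hg 0).1 hy).2
      have h5 : z = x := ((hg 1).1 hz).2
      rw [h4, h5] at h3
      exact lt_irrefl _ h3

theorem PP.countable [Countable C] (D : Set C) (h : ∀ x ∈ D, PP (Set.Iic x)) : PP D := by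
  classical
  rcases D.eq_empty_or_nonempty with rfl | hne
  · exact ⟨fun _ => ∅, fun m A hA hL => by
      obtain ⟨x, hx⟩ := hL.nonempty
      exact (hA hx).elim⟩
  obtain ⟨e, he⟩ := (Set.to_countable D).exists_eq_range hne
  have hex : ∀ x : C, ∃ n, x ∈ D → x ≤ e n := by
    intro x
    by_cases hx : x ∈ D
    · have hx' := hx
      rw [he] at hx'
      obtain ⟨n, hn⟩ := hx'
      exact ⟨n, fun _ => hn.ge⟩
    · exact ⟨0, fun h => (hx h).elim⟩
  refine PP.glue D (fun x => Nat.find (hex x)) ?_ ?_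
  · intro x hx y hy hxy
    exact Nat.find_min' _ fun _ => hxy.trans (Nat.find_spec (hex y) hy)
  · intro k
    refine (h (e k) (by rw [he]; exact ⟨k, rfl⟩)).subset ?_
    rintro x ⟨hx, hk⟩
    simp only [Set.mem_ofPred_eq] at hk
    have := Nat.find_spec (hex x) hx
    rw [hk] at this
    exact this

theorem PP.univ [Countable C] [WellFoundedLT C] : PP (Set.univ : Set C) := by
  refine PP.countable _ fun x hx => ?_
  clear hx
  induction x using WellFoundedLT.induction with
  | ind x ih =>
    refine (PP.insert_pt x (PP.countable (Set.Iio x) ih)).subset ?_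
    intro y hy
    rcases lt_or_eq_of_le hy with h | h
    · exact Or.inl h
    · exact Or.inr h

open Classical in
/-- number of switches from `s` to `u` -/
noncomputable def oscSet (s u : Finset ℕ) : Finset ℕ :=
  s.filter fun n => n ∉ u ∧ ∃ m ∈ u, n < m ∧ ∀ p ∈ s, ¬ (n < p ∧ p < m)

theorem oscSet_self (s : Finset ℕ) : oscSet s s = ∅ := by
  ext n; simp only [oscSet, Finset.mem_filter]; simp; tauto

theorem osc_step_s18 (s u d e : Finset ℕ) (hd : d.Nonempty) (he : e.Nonempty)
    (h1 : ∀ a ∈ s ∪ u, ∀ b ∈ d, a < b) (h2 : ∀ a ∈ d, ∀ b ∈ e, a < b) :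
    (oscSet (s ∪ d) (u ∪ e)).card = (oscSet s u).card + 1 := by
  have hmax := d.max'_mem hd
  have hle : ∀ b ∈ d, b ≤ d.max' hd := fun b hb => d.le_max' b hb
  set M := d.max' hd
  obtain ⟨e0, he0⟩ := he
  have hM : M ∉ oscSet s u := by
    intro h
    simp only [oscSet, Finset.mem_filter] at h
    exact lt_irrefl _ (h1 M (by simp [h.1]) M hmax)
  rw [← Finset.card_insert_of_notMem hM]
  congr 1
  ext n
  simp only [oscSet, Finset.mem_filter, Finset.mem_insert, Finset.mem_union, not_or] at *
  constructor
  · rintro ⟨hn | hn, ⟨hnu, hne⟩, m, hm, hnm, hp⟩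
    · right
      refine ⟨hn, hnu, m, ?_, hnm, fun p hps => hp p (Or.inl hps)⟩
      rcases hm with hm | hm
      · exact hm
      · exact (hp M (Or.inr hmax) ⟨h1 n (Or.inl hn) M hmax, h2 M hmax m hm⟩).elim
    · left
      rcases hm with hm | hm
      · exact absurd (h1 m (Or.inr hm) n hn) (by omega)
      · by_contra hne
        exact hp M (Or.inr hmax) ⟨lt_of_le_of_ne (hle n hn) hne, h2 M hmax m hm⟩
  · rintro (rfl | ⟨hn, hnu, m, hm, hnm, hp⟩)
    · refine ⟨Or.inr hmax, ⟨fun h => lt_irrefl _ (h1 _ (Or.inr h) _ hmax),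
        fun h => lt_irrefl _ (h2 _ hmax _ h)⟩, e0, Or.inr he0, h2 _ hmax _ he0, ?_⟩
      rintro p (hp | hp) ⟨h3, h4⟩
      · exact absurd (h1 p (Or.inl hp) _ hmax) (by omega)
      · exact absurd (hle p hp) (by omega)
    · refine ⟨Or.inl hn, ⟨hnu, fun h => ?_⟩, m, Or.inl hm, hnm, ?_⟩
      · exact lt_irrefl n ((h1 n (Or.inl hn) M hmax).trans (h2 M hmax n h))
      · rintro p (hps | hpd) ⟨h3, h4⟩
        · exact hp p hps ⟨h3, h4⟩
        · exact absurd (h1 m (Or.inr hm) p hpd) (by omega)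

theorem Good.osc {F : C → Finset ℕ} (j : ℕ) {s u : Finset ℕ} {A B : Set C}
    (hA : Good F (j + 1) s A) (hB : Good F (j + 1) u B) :
    ∃ x ∈ A, ∃ y ∈ B, (oscSet (F x) (F y)).card = (oscSet s u).card + (j + 1) := by
  have hsup : ∀ (t : Finset ℕ), ∀ a ∈ t, a ≤ t.sup id := fun t a ha => Finset.le_sup (f := id) ha
  induction j generalizing s u A B with
  | zero =>
    obtain ⟨A', hA', d, hd, hdN, x, hx, d', hd', hlt⟩ := hA ((s ∪ u).sup id)
    obtain ⟨B', hB', e, he, heN, y, hy, e', he', hlt'⟩ := hB ((s ∪ u ∪ F x).sup id)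
    refine ⟨x, hA' hx, y, hB' hy, ?_⟩
    rw [hd', he', Finset.union_assoc, Finset.union_assoc]
    obtain ⟨d0, hd0⟩ := hd
    obtain ⟨e0, he0⟩ := he
    refine osc_step_s18 _ _ _ _ ⟨d0, by simp [hd0]⟩ ⟨e0, by simp [he0]⟩ ?_ ?_
    · intro a ha b hb
      have ha2 := hsup _ a ha
      rcases Finset.mem_union.1 hb with hb | hb
      · exact lt_of_le_of_lt ha2 (hdN b hb)
      · exact (lt_of_le_of_lt ha2 (hdN d0 hd0)).trans (hlt d0 (by simp [hd0]) b hb)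
    · intro a ha b hb
      have ha2 : a ≤ (s ∪ u ∪ F x).sup id := hsup _ a (by
        rw [hd']; simp only [Finset.mem_union] at ha ⊢; tauto)
      rcases Finset.mem_union.1 hb with hb | hb
      · exact lt_of_le_of_lt ha2 (heN b hb)
      · exact (lt_of_le_of_lt ha2 (heN e0 he0)).trans (hlt' e0 (by simp [he0]) b hb)
  | succ j ih =>
    obtain ⟨A', hA', d, hd, hdN, hA2⟩ := hA ((s ∪ u).sup id)
    obtain ⟨B', hB', e, he, heN, hB2⟩ := hB (d.sup id)
    obtain ⟨x, hx, y, hy, h⟩ := ih hA2 hB2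
    refine ⟨x, hA' hx, y, hB' hy, ?_⟩
    rw [h, osc_step_s18 s u d e hd he]
    · omega
    · intro a ha b hb
      exact lt_of_le_of_lt (hsup _ a ha) (hdN b hb)
    · intro a ha b hb
      exact lt_of_le_of_lt (hsup _ a ha) (heN b hb)

theorem exists_osc_s18 [Countable C] [WellFoundedLT C] :
    ∃ F : C → Finset ℕ, ∀ j (A : Set C), Large (j + 1) A →
      ∃ x ∈ A, ∃ y ∈ A, x < y ∧
        ((oscSet (F x) (F y)).card = j + 1 ∨ (oscSet (F y) (F x)).card = j + 1) := by
  obtain ⟨F, hF⟩ := PP.univ (C := C)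
  refine ⟨F, fun j A hA => ?_⟩
  obtain ⟨s, hs⟩ := hF _ A (Set.subset_univ _) hA
  obtain ⟨x, hx, y, hy, h⟩ := Good.osc j hs hs
  rw [oscSet_self, Finset.card_empty, zero_add] at h
  rcases lt_trichotomy x y with hxy | rfl | hxy
  · exact ⟨x, hx, y, hy, hxy, Or.inl h⟩
  · simp [oscSet_self] at h
  · exact ⟨y, hy, x, hx, hxy, Or.inr h⟩

end Neg

section Neg2
universe u
open Ordinal

theorem Large.image {C D : Type*} [LinearOrder C] [LinearOrder D] {m : ℕ} {A : Set C}
    (h : Large m A) (f : C → D) (hf : StrictMonoOn f A) : Large m (f '' A) := by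
  induction m generalizing A with
  | zero => exact Set.Nonempty.image f h
  | succ m ih =>
    obtain ⟨g, hg, h2⟩ := h
    refine ⟨fun i => f '' g i, fun i => ⟨Set.image_mono (hg i).1,
      ih (hg i).2 (hf.mono (hg i).1)⟩, ?_⟩
    rintro i j hij _ ⟨x, hx, rfl⟩ _ ⟨y, hy, rfl⟩
    exact hf ((hg i).1 hx) ((hg j).1 hy) (h2 i j hij x hx y hy)

theorem large_ordinal (m : ℕ) (γ : Ordinal.{u}) :
    Large m (Set.Ico γ (γ + ω ^ (m : Ordinal.{u}))) := by
  induction m generalizing γ with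
  | zero => exact ⟨γ, by simp⟩
  | succ m ih =>
    refine ⟨fun i => Set.Ico (γ + ω ^ (m : Ordinal.{u}) * i)
      (γ + ω ^ (m : Ordinal.{u}) * i + ω ^ (m : Ordinal.{u})), fun i => ⟨?_, ih _⟩, ?_⟩
    · apply Set.Ico_subset_Ico
      · exact le_self_add
      · rw [add_assoc]
        gcongr
        have : ω ^ (m : Ordinal.{u}) * i + ω ^ (m : Ordinal.{u})
          = ω ^ (m : Ordinal.{u}) * ((i + 1 : ℕ) : Ordinal.{u}) := by
          push_cast; rw [mul_add, mul_one]
        rw [this]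
        push_cast
        rw [opow_add, opow_one]
        gcongr
        exact_mod_cast (natCast_lt_omega0 (i + 1)).le
    · intro i j hij x hx y hy
      refine lt_of_lt_of_le hx.2 (le_trans ?_ hy.1)
      rw [add_assoc]
      gcongr
      have : ω ^ (m : Ordinal.{u}) * i + ω ^ (m : Ordinal.{u})
          = ω ^ (m : Ordinal.{u}) * ((i + 1 : ℕ) : Ordinal.{u}) := by
          push_cast; rw [mul_add, mul_one]
      rw [this]
      gcongr
      exact hij

theorem neg_part (α : Ordinal.{u}) (hcnt : α.card ≤ Cardinal.aleph0)
    (hα : ω ^ ω ≤ α) (n : ℕ) (hn : 2 ≤ n) (t : ℕ) : ¬ brdLE ↥(Set.Iio α) n t := by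
  intro hbrd
  have : Countable (Set.Iio α) := by
    rw [← Cardinal.mk_le_aleph0_iff, Cardinal.mk_Iio_ordinal, Cardinal.lift_le_aleph0]
    exact hcnt
  obtain ⟨F, hF⟩ := exists_osc_s18 (C := Set.Iio α)
  let K := 2 * t + 1
  let T : ℕ → Fin (K + 1) := fun a => ⟨min a K, by omega⟩
  let i0 : Fin n := ⟨0, by omega⟩
  let i1 : Fin n := ⟨1, by omega⟩
  let χ' : (Fin n ↪o Set.Iio α) → Fin (K + 1) × Fin (K + 1) := fun f =>
    (T (oscSet (F (f i0)) (F (f i1))).card, T (oscSet (F (f i1)) (F (f i0))).card)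
  obtain ⟨U, ⟨e⟩, hU⟩ := hbrd ((K + 1) * (K + 1)) (by
    have : 2 * 1 ≤ (K + 1) * (K + 1) := Nat.mul_le_mul (by omega) (by omega)
    omega) (fun f => finProdFinEquiv (χ' f))
  have hkey : ∀ j < K, ∃ f : Fin n ↪o Set.Iio α, (∀ i, f i ∈ U) ∧
      ((oscSet (F (f i0)) (F (f i1))).card = j + 1 ∨
        (oscSet (F (f i1)) (F (f i0))).card = j + 1) := by
    intro j hj
    set W : Ordinal.{u} := ω ^ ((j + 1 : ℕ) : Ordinal.{u}) with hW
    have hWα : ∀ i : ℕ, W + i < α := by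
      intro i
      refine lt_of_lt_of_le ?_ hα
      have h1 : W < ω ^ ω := (opow_lt_opow_iff_right one_lt_omega0).2 (natCast_lt_omega0 _)
      refine isPrincipal_add_omega0_opow ω h1 ?_
      calc (i : Ordinal.{u}) < ω := natCast_lt_omega0 _
        _ = ω ^ (1 : Ordinal.{u}) := (opow_one _).symm
        _ ≤ ω ^ ω := opow_le_opow_right omega0_pos one_lt_omega0.le
    have hWα0 : W < α := by simpa using hWα 0
    let g : Ordinal.{u} → Set.Iio α := fun x =>
      if h : x < α then (e.symm ⟨x, h⟩).1 else ⟨W, hWα0⟩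
    have hg : ∀ x y, x < y → y < α → g x < g y := by
      intro x y hxy hy
      simp only [g, dif_pos hy, dif_pos (hxy.trans hy)]
      exact e.symm.strictMono (show (⟨x, hxy.trans hy⟩ : Set.Iio α) < ⟨y, hy⟩ from hxy)
    have hgU : ∀ x, x < α → g x ∈ U := by
      intro x hx
      simp only [g, dif_pos hx]
      exact (e.symm ⟨x, hx⟩).2
    have hL := large_ordinal (j + 1) (0 : Ordinal.{u})
    rw [zero_add, ← hW] at hL
    obtain ⟨_, ⟨x, hx, rfl⟩, _, ⟨y, hy, rfl⟩, hxy, hosc⟩ := hF j _ (hL.image g (by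
      intro x hx y hy hxy
      exact hg x y hxy (hy.2.trans hWα0)))
    let f' : Fin n → Set.Iio α := fun i =>
      if i.1 = 0 then g x else if i.1 = 1 then g y else g (W + (i.1 : ℕ))
    have hf' : StrictMono f' := by
      intro a b hab
      have hab' : a.1 < b.1 := hab
      simp only [f']
      have hb0 : b.1 ≠ 0 := by omega
      rw [if_neg hb0]
      by_cases hb1 : b.1 = 1
      · rw [if_pos hb1, if_pos (by omega)]
        exact hxy
      · rw [if_neg hb1]
        by_cases ha0 : a.1 = 0
        · rw [if_pos ha0]
          exact hg _ _ (lt_of_lt_of_le hx.2 le_self_add) (hWα _)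
        · rw [if_neg ha0]
          by_cases ha1 : a.1 = 1
          · rw [if_pos ha1]
            exact hg _ _ (lt_of_lt_of_le hy.2 le_self_add) (hWα _)
          · rw [if_neg ha1]
            refine hg _ _ ?_ (hWα _)
            gcongr
    refine ⟨OrderEmbedding.ofStrictMono f' hf', ?_, ?_⟩
    · intro i
      simp only [OrderEmbedding.coe_ofStrictMono, f']
      split_ifs
      · exact hgU _ (hx.2.trans hWα0)
      · exact hgU _ (hy.2.trans hWα0)
      · exact hgU _ (hWα _)
    · have h0 : f' i0 = g x := by simp [f', i0]
      have h1 : f' i1 = g y := by simp [f', i1]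
      simp only [OrderEmbedding.coe_ofStrictMono, h0, h1]
      exact hosc
  set I := (fun f => finProdFinEquiv (χ' f)) '' {f | ∀ i, f i ∈ U} with hI
  have hfin : I.Finite := Set.toFinite _
  let pr1 : Fin ((K + 1) * (K + 1)) → ℕ := fun a => (finProdFinEquiv.symm a).1
  let pr2 : Fin ((K + 1) * (K + 1)) → ℕ := fun a => (finProdFinEquiv.symm a).2
  have hsub : (Set.Icc 1 K) ⊆ pr1 '' I ∪ pr2 '' I := by
    intro j hj
    obtain ⟨hj1, hj2⟩ := hj
    obtain ⟨f, hfU, h⟩ := hkey (j - 1) (by omega)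
    rw [Nat.sub_add_cancel hj1] at h
    rcases h with h | h
    · left
      refine ⟨_, ⟨f, hfU, rfl⟩, ?_⟩
      simp only [pr1, Equiv.symm_apply_apply]
      simp [χ', T, h, hj2]
    · right
      refine ⟨_, ⟨f, hfU, rfl⟩, ?_⟩
      simp only [pr2, Equiv.symm_apply_apply]
      simp [χ', T, h, hj2]
  have h1 : (Set.Icc 1 K).ncard ≤ (pr1 '' I ∪ pr2 '' I).ncard :=
    Set.ncard_le_ncard hsub ((hfin.image _).union (hfin.image _))
  have h2 := Set.ncard_union_le (pr1 '' I) (pr2 '' I)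
  have h3 := Set.ncard_image_le (f := pr1) hfin
  have h4 := Set.ncard_image_le (f := pr2) hfin
  have h5 : (Set.Icc 1 K).ncard = K := by
    rw [← Finset.coe_Icc, Set.ncard_coe_finset]; simp
  omega

end Neg2

section Pos
universe u
open Ordinal

theorem exists_ulim {K : Type*} [Finite K] (f : ℕ → K) :
    ∃ κ, ∀ᶠ x in (Filter.hyperfilter ℕ : Filter ℕ), f x = κ := by
  obtain ⟨κ, hκ⟩ := Ultrafilter.eq_pure_of_finite ((Filter.hyperfilter ℕ).map f)
  refine ⟨κ, ?_⟩
  have : {κ} ∈ (Filter.hyperfilter ℕ).map f := by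
    rw [hκ]; exact Ultrafilter.mem_pure.2 rfl
  exact this

theorem ramsey {K : Type*} [Finite K] (N : ℕ) (c : Finset ℕ → K) :
    ∃ H : Set ℕ, H.Infinite ∧ ∃ κ, ∀ S : Finset ℕ, (S : Set ℕ) ⊆ H → S.card = N → c S = κ := by
  classical
  choose lim hlim using fun f : ℕ → K => exists_ulim f
  let cs : ℕ → Finset ℕ → K := fun i =>
    Nat.rec c (fun _ d S => lim fun x => d (insert x S)) i
  have hcs : ∀ i S, ∀ᶠ x in (Filter.hyperfilter ℕ : Filter ℕ),
      cs i (insert x S) = cs (i + 1) S := fun i S => hlim _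
  let κ := cs N ∅
  let P : Finset ℕ → Prop := fun G => ∀ S ⊆ G, S.card ≤ N → cs (N - S.card) S = κ
  have hP0 : P ∅ := by
    intro S hS _
    rw [Finset.subset_empty] at hS
    subst hS
    simp [κ]
  have hstep : ∀ G : {G // P G}, ∃ x, x ∉ G.1 ∧ P (insert x G.1) := by
    rintro ⟨G, hG⟩
    have h1 : ∀ᶠ x in (Filter.hyperfilter ℕ : Filter ℕ), ∀ S ∈ G.powerset, S.card < N →
        cs (N - S.card - 1) (insert x S) = κ := by
      rw [Filter.eventually_all_finset]
      intro S hS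
      rw [Finset.mem_powerset] at hS
      by_cases hc : S.card < N
      · filter_upwards [hcs (N - S.card - 1) S] with x hx _
        rw [hx, show N - S.card - 1 + 1 = N - S.card by omega]
        exact hG S hS hc.le
      · exact Filter.Eventually.of_forall fun x h => (hc h).elim
    have h2 : ∀ᶠ x in (Filter.hyperfilter ℕ : Filter ℕ), x ∉ G :=
      Filter.compl_mem_hyperfilter_of_finite G.finite_toSet
    obtain ⟨x, hx1, hx2⟩ := (h1.and h2).exists
    refine ⟨x, hx2, fun S hS hc => ?_⟩
    by_cases hxS : x ∈ S
    · have h3 : S.erase x ⊆ G := by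
        intro a ha
        rw [Finset.mem_erase] at ha
        exact (Finset.mem_insert.1 (hS ha.2)).resolve_left ha.1
      have h4 := Finset.card_erase_add_one hxS
      have h5 := hx1 (S.erase x) (Finset.mem_powerset.2 h3) (by omega)
      rw [Finset.insert_erase hxS, show N - (S.erase x).card - 1 = N - S.card by omega] at h5
      exact h5
    · refine hG S ?_ hc
      intro a ha
      refine (Finset.mem_insert.1 (hS ha)).resolve_left ?_
      rintro rfl
      exact hxS ha
  choose nx hnx hnxP using hstep
  let G : ℕ → {G // P G} := fun i =>
    Nat.rec ⟨∅, hP0⟩ (fun _ g => ⟨insert (nx g) g.1, hnxP g⟩) i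
  have hGs : ∀ i, (G (i + 1)).1 = insert (nx (G i)) (G i).1 := fun i => rfl
  have hGcard : ∀ i, (G i).1.card = i := by
    intro i
    induction i with
    | zero => rfl
    | succ i ih => rw [hGs, Finset.card_insert_of_notMem (hnx _), ih]
  have hmono : Monotone fun i => ((G i).1 : Set ℕ) := by
    refine monotone_nat_of_le_succ fun i => ?_
    rw [hGs]
    simp
  refine ⟨⋃ i, ((G i).1 : Set ℕ), ?_, κ, ?_⟩
  · intro hfin
    have h1 := Set.ncard_le_ncard (Set.subset_iUnion (fun i => ((G i).1 : Set ℕ))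
      ((⋃ i, ((G i).1 : Set ℕ)).ncard + 1)) hfin
    simp only [Set.ncard_coe_finset, hGcard] at h1
    omega
  · intro S hS hc
    obtain ⟨i, hi⟩ := (hmono.directed_le).exists_mem_subset_of_finset_subset_biUnion hS
    have := (G i).2 S (by exact_mod_cast hi) hc.le
    rw [hc, Nat.sub_self] at this
    exact this

/-- Ordinals whose elements can be coded by bounded-size finite sets of naturals in a Ramsey
friendly way. -/
def Nice (α : Ordinal.{u}) : Prop :=
  ∃ (J : Type) (_ : Finite J) (D : ℕ) (p : J → Finset ℕ → Ordinal.{u}),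
    ∀ H : Set ℕ, H.Infinite → ∃ φ : Ordinal.{u} → Ordinal.{u},
      (∀ x y, x < y → y < α → φ x < φ y) ∧
      ∀ x < α, φ x < α ∧ ∃ (j : J) (s : Finset ℕ), (s : Set ℕ) ⊆ H ∧ s.card ≤ D ∧ φ x = p j s

theorem Nice.finiteBRD {α : Ordinal.{u}} (h : Nice α) : finiteBRD ↥(Set.Iio α) := by
  classical
  intro n _
  obtain ⟨J, _, D, p, hp⟩ := h
  let N := n * D
  let Sh := Fin n → J × Finset (Fin N)
  refine ⟨Nat.card Sh, fun k hk χ => ?_⟩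
  let en : Finset ℕ → Fin N → ℕ := fun S i =>
    if h : S.card = N then S.orderEmbOfFin h i else 0
  let re : Finset ℕ → Sh → Fin n → Ordinal.{u} := fun S σ i =>
    p (σ i).1 ((σ i).2.image (en S))
  let c : Finset ℕ → Sh → Fin k := fun S σ =>
    if h : ∃ f : Fin n ↪o Set.Iio α, ∀ i, (f i).1 = re S σ i then χ h.choose
    else ⟨0, by omega⟩
  have hc : ∀ S σ (f : Fin n ↪o Set.Iio α), (∀ i, (f i).1 = re S σ i) → c S σ = χ f := by
    intro S σ f hf
    have hex : ∃ f : Fin n ↪o Set.Iio α, ∀ i, (f i).1 = re S σ i := ⟨f, hf⟩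
    simp only [c, dif_pos hex]
    congr 1
    ext i
    rw [hex.choose_spec i, hf i]
  obtain ⟨H, hH, κ, hκ⟩ := ramsey N c
  obtain ⟨φ, hφ1, hφ2⟩ := hp H hH
  let ψ : Set.Iio α → Set.Iio α := fun x => ⟨φ x.1, (hφ2 x.1 x.2).1⟩
  have hψ : StrictMono ψ := fun x y hxy => hφ1 x.1 y.1 hxy y.2
  refine ⟨Set.range ψ, ⟨(hψ.orderIso ψ).symm⟩, ?_⟩
  have hsub : χ '' {f | ∀ i, f i ∈ Set.range ψ} ⊆ Set.range κ := by
    rintro _ ⟨f, hf, rfl⟩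
    have hf' : ∀ i, ∃ j, ∃ s : Finset ℕ, (s : Set ℕ) ⊆ H ∧ s.card ≤ D ∧ (f i).1 = p j s := by
      intro i
      obtain ⟨x, hx⟩ := hf i
      obtain ⟨j, s, h⟩ := (hφ2 x.1 x.2).2
      refine ⟨j, s, ?_⟩
      rw [← hx]
      exact h
    choose j s hsH hsD hfs using hf'
    have hcard : (Finset.univ.biUnion s).card ≤ N := by
      refine (Finset.card_biUnion_le_card_mul _ _ D fun i _ => hsD i).trans ?_
      simp [N]
    have hsubH : ((Finset.univ.biUnion s : Finset ℕ) : Set ℕ) ⊆ H := by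
      intro a ha
      simp only [Finset.coe_biUnion, Set.mem_iUnion] at ha
      obtain ⟨i, -, hi⟩ := ha
      exact hsH i hi
    obtain ⟨S, hS1, hS2, hS3⟩ : ∃ S : Finset ℕ, (S : Set ℕ) ⊆ H ∧ Finset.univ.biUnion s ⊆ S ∧
        S.card = N := by
      obtain ⟨t, ht1, ht2⟩ := (hH.sdiff (Finset.univ.biUnion s).finite_toSet).exists_subset_card_eq
        (N - (Finset.univ.biUnion s).card)
      refine ⟨Finset.univ.biUnion s ∪ t, ?_, Finset.subset_union_left, ?_⟩
      · rw [Finset.coe_union]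
        exact Set.union_subset hsubH (ht1.trans Set.sdiff_subset)
      · rw [Finset.card_union_of_disjoint, ht2]
        · omega
        · rw [Finset.disjoint_left]
          intro a ha hat
          exact (ht1 hat).2 ha
    have hen : ∀ i, en S i = S.orderEmbOfFin hS3 i := fun i => by simp only [en, dif_pos hS3]
    refine ⟨fun i => (j i, Finset.univ.filter fun a => en S a ∈ s i), ?_⟩
    rw [← hκ S hS1 hS3]
    refine hc _ _ _ fun i => ?_
    rw [hfs i]
    simp only [re]
    congr 1
    ext a
    simp only [Finset.mem_image, Finset.mem_filter, Finset.mem_univ, true_and]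
    constructor
    · intro ha
      have haS : a ∈ S := hS2 (Finset.mem_biUnion.2 ⟨i, Finset.mem_univ _, ha⟩)
      have : a ∈ Set.range (S.orderEmbOfFin hS3) := by
        rw [Finset.range_orderEmbOfFin]; exact haS
      obtain ⟨b, hb⟩ := this
      rw [← hen] at hb
      exact ⟨b, by rw [hb]; exact ha, hb⟩
    · rintro ⟨b, hb, rfl⟩
      exact hb
  calc _ ≤ (Set.range κ).ncard := Set.ncard_le_ncard hsub (Set.toFinite _)
    _ ≤ Nat.card Sh := by
      rw [← Set.image_univ, ← Set.ncard_univ]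
      exact Set.ncard_image_le (Set.toFinite _)

theorem nice_zero : Nice (0 : Ordinal.{u}) :=
  ⟨Empty, inferInstance, 0, fun _ _ => 0, fun _ _ => ⟨id, fun _ _ h _ => h, fun x hx =>
    (not_lt_zero hx).elim⟩⟩

theorem nice_one : Nice (1 : Ordinal.{u}) := by
  refine ⟨Unit, inferInstance, 0, fun _ _ => 0, fun _ _ => ⟨id, fun _ _ h _ => h, fun x hx => ?_⟩⟩
  rw [Order.lt_one_iff] at hx
  subst hx
  exact ⟨zero_lt_one, (), ∅, by simp, by simp, rfl⟩

theorem Nice.add {α β : Ordinal.{u}} (ha : Nice α) (hb : Nice β) : Nice (α + β) := by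
  classical
  obtain ⟨J, _, D, p, hp⟩ := ha
  obtain ⟨J', _, D', p', hp'⟩ := hb
  refine ⟨J ⊕ J', inferInstance, max D D', fun j s => j.elim (fun j => p j s)
    (fun j => α + p' j s), fun H hH => ?_⟩
  obtain ⟨φ, h1, h2⟩ := hp H hH
  obtain ⟨φ', h1', h2'⟩ := hp' H hH
  refine ⟨fun x => if x < α then φ x else α + φ' (x - α), ?_, ?_⟩
  · intro x y hxy hy
    by_cases hyα : y < α
    · simp only [if_pos hyα, if_pos (hxy.trans hyα)]
      exact h1 x y hxy hyα
    · simp only [if_neg hyα]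
      by_cases hxα : x < α
      · simp only [if_pos hxα]
        exact lt_of_lt_of_le (h2 x hxα).1 le_self_add
      · simp only [if_neg hxα]
        push Not at hxα hyα
        obtain ⟨x, rfl⟩ := exists_add_of_le hxα
        obtain ⟨y, rfl⟩ := exists_add_of_le hyα
        simp only [Ordinal.add_sub_cancel, add_lt_add_iff_left] at *
        exact h1' x y hxy hy
  · intro x hx
    by_cases hxα : x < α
    · simp only [if_pos hxα]
      obtain ⟨h3, j, s, hs, hD, he⟩ := h2 x hxα
      exact ⟨lt_of_lt_of_le h3 le_self_add, Sum.inl j, s, hs, hD.trans (le_max_left _ _), he⟩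
    · simp only [if_neg hxα]
      push Not at hxα
      obtain ⟨x, rfl⟩ := exists_add_of_le hxα
      simp only [Ordinal.add_sub_cancel, add_lt_add_iff_left] at *
      obtain ⟨h3, j, s, hs, hD, he⟩ := h2' x hx
      exact ⟨h3, Sum.inr j, s, hs, hD.trans (le_max_right _ _), by simp [he]⟩

theorem Nice.mul_omega {γ : Ordinal.{u}} (h : Nice γ) : Nice (γ * ω) := by
  classical
  rcases eq_or_ne γ 0 with rfl | hγ
  · rw [zero_mul]; exact nice_zero
  obtain ⟨J, _, D, p, hp⟩ := h
  refine ⟨J, inferInstance, D + 1, fun j s => γ * ((sInf (s : Set ℕ) : ℕ) : Ordinal.{u}) +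
    p j (s.erase (sInf (s : Set ℕ))), fun H hH => ?_⟩
  have hinf : ∀ q, (H ∩ Set.Ioi (Nat.nth (· ∈ H) q)).Infinite := by
    intro q
    have : H ∩ Set.Ioi (Nat.nth (· ∈ H) q) = H \ Set.Iic (Nat.nth (· ∈ H) q) := by
      ext a; simp
    rw [this]
    exact hH.sdiff (Set.finite_Iic _)
  have hH' : (Set.ofPred (· ∈ H)).Infinite := hH
  have hnth : StrictMono (Nat.nth (· ∈ H)) := Nat.nth_strictMono hH'
  have hmem : ∀ q, Nat.nth (· ∈ H) q ∈ H := fun q => Nat.nth_mem_of_infinite hH' q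
  choose φ h1 h2 using fun q => hp _ (hinf q)
  have hq : ∀ x : Ordinal.{u}, ∃ q : ℕ, x < γ * ω → x / γ = q := by
    intro x
    by_cases hx : x < γ * ω
    · rw [Ordinal.lt_mul_iff_div_lt hγ] at hx
      obtain ⟨q, hq⟩ := lt_omega0.1 hx
      exact ⟨q, fun _ => hq⟩
    · exact ⟨0, fun h => (hx h).elim⟩
  choose q hq using hq
  refine ⟨fun x => γ * (Nat.nth (· ∈ H) (q x) : ℕ) + φ (q x) (x % γ), ?_, ?_⟩
  · intro x y hxy hy
    have hqx := hq x (hxy.trans hy)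
    have hqy := hq y hy
    have hle : q x ≤ q y := by
      have : x / γ ≤ y / γ := by
        rw [← Ordinal.mul_le_iff_le_div hγ]
        exact (Ordinal.mul_div_le x γ).trans hxy.le
      rw [hqx, hqy] at this
      exact_mod_cast this
    rcases hle.lt_or_eq with hlt | heq
    · calc γ * (Nat.nth (· ∈ H) (q x) : ℕ) + φ (q x) (x % γ)
          < γ * (Nat.nth (· ∈ H) (q x) : ℕ) + γ := by
            gcongr
            exact (h2 (q x) (x % γ) (Ordinal.mod_lt x hγ)).1
        _ = γ * ((Nat.nth (· ∈ H) (q x) + 1 : ℕ) : Ordinal.{u}) := by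
            push_cast; rw [mul_add, mul_one]
        _ ≤ γ * (Nat.nth (· ∈ H) (q y) : ℕ) := by
            gcongr
            exact hnth hlt
        _ ≤ _ := le_self_add
    · simp only [heq]
      gcongr
      refine h1 _ _ _ ?_ (Ordinal.mod_lt y hγ)
      rw [← Ordinal.div_add_mod x γ, ← Ordinal.div_add_mod y γ, hqx, hqy, heq] at hxy
      simpa using hxy
  · intro x hx
    obtain ⟨h3, j, s, hs, hD, he⟩ := h2 (q x) (x % γ) (Ordinal.mod_lt x hγ)
    set a := Nat.nth (· ∈ H) (q x) with ha
    constructor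
    · calc γ * (a : ℕ) + φ (q x) (x % γ) < γ * (a : ℕ) + γ := by gcongr
        _ = γ * ((a + 1 : ℕ) : Ordinal.{u}) := by
            push_cast; rw [mul_add, mul_one]
        _ ≤ γ * ω := by
            gcongr
            exact (natCast_lt_omega0 _).le
    · have has : a ∉ s := fun h => lt_irrefl a (hs h).2
      have hinf : sInf ((insert a s : Finset ℕ) : Set ℕ) = a := by
        refine IsLeast.csInf_eq ⟨by simp, ?_⟩
        intro b hb
        simp only [Finset.coe_insert, Set.mem_insert_iff] at hb
        rcases hb with rfl | hb
        · exact le_rfl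
        · exact (hs hb).2.le
      refine ⟨j, insert a s, ?_, ?_, ?_⟩
      · rw [Finset.coe_insert]
        exact Set.insert_subset (hmem _) (hs.trans Set.inter_subset_left)
      · rw [Finset.card_insert_of_notMem has]; omega
      · beta_reduce
        rw [hinf, Finset.erase_insert has, he]

theorem nice_pow (d : ℕ) : Nice (ω ^ (d : Ordinal.{u})) := by
  induction d with
  | zero => simpa using nice_one
  | succ d ih =>
    push_cast
    rw [opow_add, opow_one]
    exact ih.mul_omega

theorem Nice.mul_nat {γ : Ordinal.{u}} (h : Nice γ) (q : ℕ) : Nice (γ * q) := by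
  induction q with
  | zero => simpa using nice_zero
  | succ q ih =>
    push_cast
    rw [mul_add, mul_one]
    exact ih.add h

theorem nice_of_lt_pow (d : ℕ) (α : Ordinal.{u}) (h : α < ω ^ (d : Ordinal.{u})) : Nice α := by
  induction d generalizing α with
  | zero =>
    have : α = 0 := by simpa using h
    rw [this]; exact nice_zero
  | succ d ih =>
    push_cast at h
    rw [opow_add, opow_one, Ordinal.lt_mul_iff] at h
    obtain ⟨q, hq, r, hr, rfl⟩ := h
    obtain ⟨q, rfl⟩ := lt_omega0.1 hq
    exact ((nice_pow d).mul_nat q).add (ih r hr)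

theorem nice_of_lt (α : Ordinal.{u}) (h : α < ω ^ ω) : Nice α := by
  obtain ⟨c, hc, h⟩ := (lt_opow_of_isSuccLimit omega0_ne_zero isSuccLimit_omega0).1 h
  obtain ⟨d, rfl⟩ := lt_omega0.1 hc
  exact nice_of_lt_pow d α h

end Pos

/-- Main theorem: a countable ordinal `α` has finite big Ramsey degrees iff `α < ω^ω`;
moreover if `α ≥ ω^ω` then `T(n, α) = ∞` for all `2 ≤ n < ω`. -/
theorem stmt18 (α : Ordinal) (hcnt : α.card ≤ Cardinal.aleph0) :
    (finiteBRD ↥(Set.Iio α) ↔ α < Ordinal.omega0 ^ Ordinal.omega0) ∧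
    (Ordinal.omega0 ^ Ordinal.omega0 ≤ α →
      ∀ n : ℕ, 2 ≤ n → ¬∃ t : ℕ, brdLE ↥(Set.Iio α) n t) := by
  have hneg : Ordinal.omega0 ^ Ordinal.omega0 ≤ α →
      ∀ n : ℕ, 2 ≤ n → ¬∃ t : ℕ, brdLE ↥(Set.Iio α) n t := by
    rintro hα n hn ⟨t, ht⟩
    exact neg_part α hcnt hα n hn t ht
  refine ⟨⟨fun h => ?_, fun h => (nice_of_lt α h).finiteBRD⟩, hneg⟩
  by_contra hα
  exact hneg (not_lt.1 hα) 2 le_rfl (h 2 (by norm_num))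
end
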